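/- For every f with 1 ≤ f and f+1 ≤ n and every agent a, the formula Byz_f ∧ B_{≥f+1}H_a⊥ → [¬H_a⊥ ∨ B_{≥f+1}H_a⊥]_a Byz_{f−1} is valid on the class KH: if at most f agents are faulty and at least f+1 agents believe agent a is faulty, then after publicly updating agent a's hope relation with ¬H_a⊥ ∨ B_{≥f+1}H_a⊥ (all other agents j updated trivially with ¬H_j⊥), at most f−1 agents are faulty. -/

import Mathlib

/-- A Kripke model (raw data): valuation, and knowledge and hope relations for `n` agents. -/
structure Model (n : ℕ) (W : Type) where
  val : ℕ → W → Prop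
  K : Fin n → W → W → Prop
  H : Fin n → W → W → Prop

/-- Membership in the class KH: each `K i` is an equivalence relation, each `H i` is
shift-serial, `H i ⊆ K i` (HinK), and oneH. -/
def Model.KH {n : ℕ} {W : Type} (M : Model n W) : Prop :=
  (∀ i, Equivalence (M.K i)) ∧
  (∀ i w v, M.H i w v → ∃ z, M.H i v z) ∧
  (∀ i w v, M.H i w v → M.K i w v) ∧
  (∀ i w v, (∃ x, M.H i w x) → (∃ x, M.H i v x) → M.K i w v → M.H i w v)

/-- Formulas of the language `L_KH^pub`: atoms, negation, conjunction, knowledge `K i`,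
hope `H i`, and public hope update `[φ_1,…,φ_n]ψ` (the tuple given as `Fin n → Form n`). -/
inductive Form (n : ℕ) : Type where
  | atom : ℕ → Form n
  | neg : Form n → Form n
  | and : Form n → Form n → Form n
  | know : Fin n → Form n → Form n
  | hope : Fin n → Form n → Form n
  | upd : (Fin n → Form n) → Form n → Form n

/-- Replace the hope relations: `w H_i^χ v` iff `w K_i v`, `c i` holds at `w`, and at `v`. -/
def Model.hopeUpd {n : ℕ} {W : Type} (M : Model n W) (c : Fin n → W → Prop) : Model n W where
  val := M.val
  K := M.K
  H := fun i w v => M.K i w v ∧ c i w ∧ c i v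

/-- Truth at a world. -/
def sat {n : ℕ} {W : Type} : Model n W → W → Form n → Prop
  | M, w, .atom p => M.val p w
  | M, w, .neg φ => ¬ sat M w φ
  | M, w, .and φ ψ => sat M w φ ∧ sat M w ψ
  | M, w, .know i φ => ∀ v, M.K i w v → sat M v φ
  | M, w, .hope i φ => ∀ v, M.H i w v → sat M v φ
  | M, w, .upd φs ψ => sat (M.hopeUpd (fun i v => sat M v (φs i))) w ψ

/-- The publicly updated model `M^{φ⃗}`. -/
def Model.pubUpdate {n : ℕ} {W : Type} (M : Model n W) (φs : Fin n → Form n) : Model n W :=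
  M.hopeUpd (fun i v => sat M v (φs i))

def ftop {n : ℕ} : Form n := .neg (.and (.atom 0) (.neg (.atom 0)))
def fbot {n : ℕ} : Form n := .neg ftop
def fimpl {n : ℕ} (φ ψ : Form n) : Form n := .neg (.and φ (.neg ψ))
def forr {n : ℕ} (φ ψ : Form n) : Form n := .neg (.and (.neg φ) (.neg ψ))
def fiff {n : ℕ} (φ ψ : Form n) : Form n := .and (fimpl φ ψ) (fimpl ψ φ)
/-- `¬H_i⊥`: agent `i` is correct. -/
def fcorrect {n : ℕ} (i : Fin n) : Form n := .neg (.hope i fbot)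

/-- Validity on the class KH: true at every world of every (nonempty) model in KH. -/
def Valid {n : ℕ} (φ : Form n) : Prop :=
  ∀ (W : Type) (M : Model n W), Nonempty W → M.KH → ∀ w : W, sat M w φ

/-- Conjunction of a list of formulas. -/
def bigAnd {n : ℕ} : List (Form n) → Form n
  | [] => ftop
  | φ :: l => .and φ (bigAnd l)

/-- Disjunction of a list of formulas. -/
def bigOr {n : ℕ} : List (Form n) → Form n
  | [] => fbot
  | φ :: l => forr φ (bigOr l)

/-- The list of all groups `G ⊆ A` of agents with `|G| = k`. -/
noncomputable def groups (n k : ℕ) : List (Finset (Fin n)) :=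
  ((Finset.univ : Finset (Fin n)).powerset.filter (fun G => G.card = k)).toList

/-- `Byz_f := ⋁_{G⊆A, |G|=n−f} ⋀_{i∈G} ¬H_i⊥`: at least `n−f` agents are correct,
i.e., at most `f` agents are faulty. -/
noncomputable def Byz (n f : ℕ) : Form n :=
  bigOr ((groups n (n - f)).map (fun G => bigAnd (G.toList.map (fun i => fcorrect i))))

/-- `φ⃗^k := ⋁_{G⊆A, |G|=k} ⋀_{i∈G} φ_i`: at least `k` of the formulas `φ_i` hold. -/
noncomputable def vecAtLeast {n : ℕ} (φs : Fin n → Form n) (k : ℕ) : Form n :=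
  bigOr ((groups n k).map (fun G => bigAnd (G.toList.map φs)))

/-- Belief: `B_i ψ := K_i(¬H_i⊥ → ψ)`. -/
def fbel {n : ℕ} (i : Fin n) (ψ : Form n) : Form n := .know i (fimpl (fcorrect i) ψ)

/-- `B_{≥f}ψ := ⋁_{G⊆A, |G|=f} ⋀_{i∈G} B_i ψ`: at least `f` agents believe `ψ`. -/
noncomputable def Bge (n f : ℕ) (ψ : Form n) : Form n :=
  bigOr ((groups n f).map (fun G => bigAnd (G.toList.map (fun i => fbel i ψ))))

theorem sat_forr' {n : ℕ} {W : Type} (M : Model n W) (w : W) (φ ψ : Form n) :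
    sat M w (forr φ ψ) ↔ sat M w φ ∨ sat M w ψ := by
  simp only [forr, sat]; tauto

theorem sat_fimpl' {n : ℕ} {W : Type} (M : Model n W) (w : W) (φ ψ : Form n) :
    sat M w (fimpl φ ψ) ↔ (sat M w φ → sat M w ψ) := by
  simp only [fimpl, sat]; tauto

theorem sat_ftop' {n : ℕ} {W : Type} (M : Model n W) (w : W) : sat M w ftop := by
  simp only [ftop, sat]; tauto

theorem sat_fbot' {n : ℕ} {W : Type} (M : Model n W) (w : W) : ¬ sat M w fbot := by
  simp only [fbot, ftop, sat]; tauto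

theorem sat_bigAnd' {n : ℕ} {W : Type} (M : Model n W) (w : W) (l : List (Form n)) :
    sat M w (bigAnd l) ↔ ∀ φ ∈ l, sat M w φ := by
  induction l with
  | nil => simp [bigAnd, sat_ftop']
  | cons φ l ih => simp [bigAnd, sat, ih]

theorem sat_bigOr' {n : ℕ} {W : Type} (M : Model n W) (w : W) (l : List (Form n)) :
    sat M w (bigOr l) ↔ ∃ φ ∈ l, sat M w φ := by
  induction l with
  | nil => simp [bigOr, sat_fbot']
  | cons φ l ih => simp [bigOr, sat_forr', ih]

theorem sat_groups' {n : ℕ} {W : Type} (M : Model n W) (w : W) (k : ℕ) (φs : Fin n → Form n) :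
    sat M w (bigOr ((groups n k).map (fun G => bigAnd (G.toList.map φs)))) ↔
      ∃ G : Finset (Fin n), G.card = k ∧ ∀ i ∈ G, sat M w (φs i) := by
  simp [sat_bigOr', sat_bigAnd', groups]

theorem sat_fcorrect' {n : ℕ} {W : Type} (M : Model n W) (w : W) (i : Fin n) :
    sat M w (fcorrect i) ↔ ∃ v, M.H i w v := by
  simp [fcorrect, sat, sat_fbot']

/-- for `1 ≤ f` and `f+1 ≤ n` and any agent `a`, the formula
`Byz_f ∧ B_{≥f+1}H_a⊥ → [¬H_a⊥ ∨ B_{≥f+1}H_a⊥]_a Byz_{f−1}` is valid on KH, where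
`[φ]_a ψ` is the public update with `φ_a = φ` and `φ_j = ¬H_j⊥` for `j ≠ a`. -/
theorem byz_correction {n f : ℕ} (hn : 0 < n) (hf1 : 1 ≤ f) (hfn : f + 1 ≤ n) (a : Fin n) :
    Valid (fimpl (.and (Byz n f) (Bge n (f + 1) (.hope a fbot)))
      (.upd (fun j => if j = a then forr (fcorrect a) (Bge n (f + 1) (.hope a fbot))
                      else fcorrect j)
        (Byz n (f - 1)))) := by
  intro W M _ hKH w
  rw [sat_fimpl']
  intro h
  obtain ⟨hB, hG⟩ : sat M w (Byz n f) ∧ sat M w (Bge n (f + 1) (.hope a fbot)) := h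
  have hG0 := hG
  unfold Byz at hB
  unfold Bge at hG
  rw [sat_groups'] at hB hG
  obtain ⟨G, hGc, hGs⟩ := hB
  obtain ⟨G', hGc', hGs'⟩ := hG
  have hne : (G ∩ G').Nonempty := by
    rw [← Finset.card_pos]
    have h1 := Finset.card_union_add_card_inter G G'
    have h2 := Finset.card_le_univ (G ∪ G')
    rw [Fintype.card_fin] at h2
    omega
  obtain ⟨i, hi⟩ := hne
  rw [Finset.mem_inter] at hi
  have hbel := hGs' i hi.2 w ((hKH.1 i).refl w)
  rw [sat_fimpl'] at hbel
  have hfaulty := hbel (hGs i hi.1)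
  have haG : a ∉ G := fun ha => hGs a ha hfaulty
  simp only [sat]
  unfold Byz
  rw [sat_groups']
  refine ⟨insert a G, ?_, ?_⟩
  · rw [Finset.card_insert_of_notMem haG]; omega
  · intro j hj
    rw [sat_fcorrect']
    have key : sat M w (if j = a then forr (fcorrect a) (Bge n (f + 1) (.hope a fbot))
        else fcorrect j) := by
      split_ifs with hja
      · rw [sat_forr']; exact Or.inr hG0
      · exact hGs j ((Finset.mem_insert.1 hj).resolve_left hja)
    exact ⟨w, (hKH.1 j).refl w, key, key⟩
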